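/- The central trinomial coefficient satisfies C(n,3,n) \sim 3^{n+1/2}/(2\sqrt{\pi n}) as n \to \infty; that is, the limit as n \to \infty of C(n,3,n) \cdot 2\sqrt{\pi n} / 3^{n+1/2} equals 1. -/

import Mathlib

open Filter

/-- The polynomial coefficient `C(n,q,k)`: the coefficient of `x^k` in
`(1 + x + x^2 + ⋯ + x^(q-1))^n`. -/
noncomputable def polyCoeff (n q k : ℕ) : ℕ :=
  ((∑ i ∈ Finset.range q, Polynomial.X ^ i : Polynomial ℕ) ^ n).coeff k

/-!
The integers `0, …, q - 1` have mean `(q - 1) / 2` and variance `(q ^ 2 - 1) / 12`, and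
`C(n,q,k) / q ^ n` is the probability that `n` independent uniform picks among them sum to `k`, so
at the centre `k = n * (q - 1) / 2` a local limit theorem predicts the value
`1 / √(2 * π * n * (q ^ 2 - 1) / 12)`. By Fourier inversion that central coefficient is
`1 / (2 * π)` times the integral over `[-π, π]` of the `n`-th power of the real Dirichlet kernel
`D` with `q` terms. The normalised kernel satisfies
`D t / q = 1 - (q ^ 2 - 1) / 24 * t ^ 2 + o(t ^ 2)` and is smaller than `1` in absolute value away
from `0`, so Laplace's method gives the asymptotics of the integral. The trinomial case is `q = 3`.
-/

open Asymptotics MeasureTheory Set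
open scoped Real Topology

section Laplace

variable {f : ℝ → ℝ} {b c : ℝ} {K : Set ℝ}

theorem tendsto_one_sub_div_sq
    (hf : (fun t => f t - (1 - b * t ^ 2)) =o[𝓝 0] fun t => t ^ 2) :
    Tendsto (fun t => (1 - f t) / t ^ 2) (𝓝[≠] 0) (𝓝 b) := by
  have hlim : Tendsto (fun t => b - (f t - (1 - b * t ^ 2)) / t ^ 2) (𝓝[≠] 0) (𝓝 b) := by
    simpa using tendsto_const_nhds.sub (hf.mono nhdsWithin_le_nhds).tendsto_div_nhds_zero
  refine hlim.congr' ?_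
  filter_upwards [self_mem_nhdsWithin] with t (ht : t ≠ 0)
  field_simp
  ring

theorem tendsto_one_of_isLittleO_sq
    (hf : (fun t => f t - (1 - b * t ^ 2)) =o[𝓝 0] fun t => t ^ 2) :
    Tendsto f (𝓝 0) (𝓝 1) := by
  have hsq : Tendsto (fun t : ℝ => t ^ 2) (𝓝 0) (𝓝 0) := by
    simpa using (continuous_pow 2).tendsto (0 : ℝ)
  simpa using (hf.trans_tendsto hsq).add ((hsq.const_mul b).const_sub 1)

theorem exists_forall_abs_le_exp_neg_mul_sq (hK : IsCompact K) (hfK : ContinuousOn f K)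
    (hlt : ∀ t ∈ K, t ≠ 0 → |f t| < 1) (hb : 0 < b)
    (hf : (fun t => f t - (1 - b * t ^ 2)) =o[𝓝 0] fun t => t ^ 2) :
    ∃ c > 0, ∀ t ∈ K, |f t| ≤ Real.exp (-c * t ^ 2) := by
  have hnonneg : ∀ᶠ t in 𝓝 0, 0 ≤ f t :=
    ((tendsto_one_of_isLittleO_sq hf).eventually_const_lt one_pos).mono fun _ => le_of_lt
  have hzero : f 0 = 1 := tendsto_nhds_unique
    (tendsto_pure_nhds f 0) ((tendsto_one_of_isLittleO_sq hf).mono_left (pure_le_nhds 0))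
  -- The quotient `(1 - |f t|) / t ^ 2`, extended by its limit `b` at `0`, is continuous and
  -- positive on the compact set `K`, hence bounded below by some `c > 0`.
  let g : ℝ → ℝ := Function.update (fun t => (1 - |f t|) / t ^ 2) 0 b
  have hg (t : ℝ) (ht : t ≠ 0) : g t = (1 - |f t|) / t ^ 2 := Function.update_of_ne ht _ _
  have hg_cont : ContinuousOn g K := by
    refine continuousOn_update_iff.2 ⟨?_, fun _ => ?_⟩
    · exact (continuousOn_const.sub (hfK.mono sdiff_subset).abs).div (by fun_prop)
        fun t ht => pow_ne_zero 2 ht.2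
    · refine ((tendsto_one_sub_div_sq hf).mono_left
        (nhdsWithin_mono 0 fun t ht => ht.2)).congr' ?_
      filter_upwards [nhdsWithin_le_nhds hnonneg] with t ht
      rw [abs_of_nonneg ht]
  have hg_pos (t : ℝ) (ht : t ∈ K) : 0 < g t := by
    rcases eq_or_ne t 0 with rfl | ht0
    · simpa only [g, Function.update_self] using hb
    · rw [hg t ht0]
      exact div_pos (sub_pos.2 (hlt t ht ht0)) (by positivity)
  obtain ⟨c, hc, hcg⟩ := hK.exists_forall_le' hg_cont hg_pos
  refine ⟨c, hc, fun t ht => ?_⟩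
  rcases eq_or_ne t 0 with rfl | ht0
  · simp [hzero]
  · have hct := hcg t ht
    rw [hg t ht0, le_div_iff₀ (by positivity)] at hct
    linarith [Real.add_one_le_exp (-c * t ^ 2)]

theorem tendsto_comp_div_sqrt_pow
    (hf : (fun t => f t - (1 - b * t ^ 2)) =o[𝓝 0] fun t => t ^ 2) (s : ℝ) :
    Tendsto (fun n : ℕ => f (s / √n) ^ n) atTop (𝓝 (Real.exp (-b * s ^ 2))) := by
  have harg : Tendsto (fun n : ℕ => s / √(n : ℝ)) atTop (𝓝 0) :=
    tendsto_const_nhds.div_atTop (Real.tendsto_sqrt_atTop.comp tendsto_natCast_atTop_atTop)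
  have hsq : ∀ᶠ n : ℕ in atTop, n * (s / √n) ^ 2 = s ^ 2 := by
    filter_upwards [eventually_gt_atTop 0] with n hn
    have hn' : (0 : ℝ) < n := Nat.cast_pos.2 hn
    rw [div_pow, Real.sq_sqrt hn'.le, mul_div_cancel₀ _ hn'.ne']
  have herr : Tendsto (fun n : ℕ => n * (f (s / √n) - (1 - b * (s / √n) ^ 2))) atTop (𝓝 0) := by
    refine (isLittleO_one_iff ℝ).1 ?_
    refine ((isBigO_refl (fun n : ℕ => (n : ℝ)) atTop).mul_isLittleO
      (hf.comp_tendsto harg)).trans_isBigO ?_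
    exact (isBigO_const_const (s ^ 2) one_ne_zero atTop).congr' (hsq.mono fun n hn => hn.symm) .rfl
  have hlim : Tendsto (fun n : ℕ => n * (f (s / √n) - 1)) atTop (𝓝 (-b * s ^ 2)) := by
    have hsum := herr.add_const (-b * s ^ 2)
    rw [zero_add] at hsum
    refine hsum.congr' ?_
    filter_upwards [hsq] with n hn
    linear_combination b * hn
  simpa only [add_sub_cancel] using Real.tendsto_one_add_pow_exp_of_tendsto hlim

theorem tendsto_sqrt_mul_integral_pow (hfm : Measurable f) (hc : 0 < c)
    (hbound : ∀ t, |f t| ≤ Real.exp (-c * t ^ 2))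
    (hf : (fun t => f t - (1 - b * t ^ 2)) =o[𝓝 0] fun t => t ^ 2) :
    Tendsto (fun n : ℕ => √n * ∫ t, f t ^ n) atTop (𝓝 √(π / b)) := by
  rw [← integral_gaussian]
  have hdom : Tendsto (fun n : ℕ => ∫ s, f (s / √n) ^ n) atTop
      (𝓝 (∫ s, Real.exp (-b * s ^ 2))) := by
    refine tendsto_integral_filter_of_dominated_convergence (fun s => Real.exp (-c * s ^ 2))
      (Eventually.of_forall fun n => Measurable.aestronglyMeasurable (by fun_prop)) ?_
      (integrable_exp_neg_mul_sq hc) (Eventually.of_forall (tendsto_comp_div_sqrt_pow hf))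
    filter_upwards [eventually_gt_atTop 0] with n hn
    refine Eventually.of_forall fun s => ?_
    have hn' : (0 : ℝ) < n := Nat.cast_pos.2 hn
    calc ‖f (s / √n) ^ n‖ = |f (s / √n)| ^ n := by rw [Real.norm_eq_abs, abs_pow]
      _ ≤ Real.exp (-c * (s / √n) ^ 2) ^ n := by gcongr; exact hbound _
      _ = Real.exp (-c * s ^ 2) := by
        rw [← Real.exp_nat_mul, div_pow, Real.sq_sqrt hn'.le]
        congr 1
        field_simp
  refine hdom.congr fun n => ?_
  rw [Measure.integral_comp_div (fun t => f t ^ n), abs_of_nonneg (Real.sqrt_nonneg _),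
    smul_eq_mul]

theorem tendsto_sqrt_mul_setIntegral_pow (hK : IsCompact K) (hK0 : K ∈ 𝓝 0)
    (hfK : ContinuousOn f K) (hlt : ∀ t ∈ K, t ≠ 0 → |f t| < 1) (hb : 0 < b)
    (hf : (fun t => f t - (1 - b * t ^ 2)) =o[𝓝 0] fun t => t ^ 2) :
    Tendsto (fun n : ℕ => √n * ∫ t in K, f t ^ n) atTop (𝓝 √(π / b)) := by
  obtain ⟨c, hc, hbound⟩ := exists_forall_abs_le_exp_neg_mul_sq hK hfK hlt hb hf
  have hmeas : Measurable (K.indicator f) := by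
    classical
    rw [← piecewise_eq_indicator]
    exact hfK.measurable_piecewise continuousOn_const hK.measurableSet
  have hbound' (t : ℝ) : |K.indicator f t| ≤ Real.exp (-c * t ^ 2) := by
    by_cases ht : t ∈ K
    · simpa only [indicator_of_mem ht] using hbound t ht
    · simpa only [indicator_of_notMem ht, abs_zero] using (Real.exp_pos _).le
  have hf' : (fun t => K.indicator f t - (1 - b * t ^ 2)) =o[𝓝 0] fun t => t ^ 2 := by
    refine hf.congr' ?_ .rfl
    filter_upwards [hK0] with t ht
    rw [indicator_of_mem ht]
  refine (tendsto_sqrt_mul_integral_pow hmeas hc hbound' hf').congr' ?_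
  filter_upwards [eventually_ne_atTop 0] with n hn
  rw [← integral_indicator hK.measurableSet]
  congr 2 with t
  by_cases ht : t ∈ K
  · simp only [indicator_of_mem ht]
  · simp only [indicator_of_notMem ht, zero_pow hn]

end Laplace

theorem integral_exp_neg_mul_eval_exp (p : Polynomial ℂ) (n : ℕ) :
    ∫ t in -π..π, Complex.exp (-(n * t * Complex.I)) * p.eval (Complex.exp (t * Complex.I)) =
      2 * π * p.coeff n := by
  have : Fact (0 < 2 * π) := ⟨Real.two_pi_pos⟩
  have hfourier (t : ℝ) : fourier (-n : ℤ) (t : AddCircle (2 * π)) =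
      Complex.exp (-(n * t * Complex.I)) := by
    rw [fourier_coe_apply]
    push_cast
    congr 1
    field_simp
  have heval (t : ℝ) : p.toAddCircle (t : AddCircle (2 * π)) =
      p.eval (Complex.exp (t * Complex.I)) := by
    rw [Polynomial.toAddCircle, Polynomial.aeval_continuousMap_apply]
    simp [AddCircle.toCircle_apply_mk]
  have h := p.fourierCoeff_toAddCircle_natCast n
  rw [fourierCoeff_eq_intervalIntegral _ _ (-π), show -π + 2 * π = π by ring] at h
  simp only [hfourier, heval, smul_eq_mul, Complex.real_smul] at h
  rw [← h, ← mul_assoc]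
  push_cast
  rw [mul_one_div_cancel (mul_ne_zero two_ne_zero (Complex.ofReal_ne_zero.2 Real.pi_ne_zero)),
    one_mul]

theorem cos_mul_sub_isLittleO_sq (c : ℝ) :
    (fun t => Real.cos (c * t) - (1 - c ^ 2 / 2 * t ^ 2)) =o[𝓝 0] fun t => t ^ 2 := by
  have hbound : (fun x => Real.cos x - (1 - x ^ 2 / 2)) =O[𝓝 0] fun x => x ^ 4 := by
    refine .of_bound (5 / 96) ?_
    filter_upwards [Metric.closedBall_mem_nhds (0 : ℝ) one_pos] with x hx
    rw [mem_closedBall_zero_iff, Real.norm_eq_abs] at hx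
    simpa only [Real.norm_eq_abs, abs_pow, mul_comm] using Real.cos_bound hx
  have hscale : Tendsto (fun t => c * t) (𝓝 0) (𝓝 0) := by
    simpa using (continuous_const_mul c).tendsto 0
  have hquartic : (fun t => Real.cos (c * t) - (1 - c ^ 2 / 2 * t ^ 2)) =O[𝓝 0] fun t => t ^ 4 := by
    refine ((hbound.comp_tendsto hscale).congr' (.of_forall fun t => ?_) .rfl).trans
      (.of_bound (|c| ^ 4) (.of_forall fun t => ?_))
    · simp only [Function.comp_apply]
      ring
    · simp [mul_pow]
  exact hquartic.trans_isLittleO (isLittleO_pow_pow (by norm_num))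

theorem sum_range_sub_sq {F : Type*} [Field F] [CharZero F] (q : ℕ) (c : F) :
    ∑ j ∈ Finset.range q, (j - c) ^ 2 =
      q * (q - 1) * (2 * q - 1) / 6 - c * q * (q - 1) + q * c ^ 2 := by
  induction q with
  | zero => simp
  | succ q ih =>
    rw [Finset.sum_range_succ, ih]
    push_cast
    ring

/-- The Dirichlet kernel with `q` frequencies, centred so as to be real: it is
`∑ j < q, exp (i * j * t)` without the phase `exp (i * (q - 1) / 2 * t)`, that is,
`sin (q * t / 2) / sin (t / 2)` with its removable singularities filled in. -/
noncomputable def dirichletKernel (q : ℕ) (t : ℝ) : ℝ :=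
  ∑ j ∈ Finset.range q, Real.cos ((j - (q - 1) / 2) * t)

namespace dirichletKernel

@[fun_prop]
protected theorem continuous (q : ℕ) : Continuous (dirichletKernel q) := by
  unfold dirichletKernel
  fun_prop

theorem ofReal_mul_exp (q : ℕ) (t : ℝ) :
    (dirichletKernel q t : ℂ) * Complex.exp ((q - 1) / 2 * t * Complex.I) =
      ∑ j ∈ Finset.range q, Complex.exp (t * Complex.I) ^ j := by
  let e (j : ℕ) : ℂ := Complex.exp ((j - (q - 1) / 2) * t * Complex.I)
  -- The reflection `j ↦ q - 1 - j` negates the centred frequencies.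
  have hreflect : ∑ j ∈ Finset.range q, Complex.exp (-((j - (q - 1) / 2) * t) * Complex.I) =
      ∑ j ∈ Finset.range q, e j := by
    rw [← Finset.sum_range_reflect]
    refine Finset.sum_congr rfl fun j hj => ?_
    have hjq : j ≤ q - 1 := Nat.le_sub_one_of_lt (Finset.mem_range.1 hj)
    have hq : 1 ≤ q := by grind
    simp only [e]
    push_cast [Nat.cast_sub hjq, Nat.cast_sub hq]
    ring_nf
  have hsum : (dirichletKernel q t : ℂ) = ∑ j ∈ Finset.range q, e j := by
    calc (dirichletKernel q t : ℂ) = ∑ j ∈ Finset.range q, Complex.cos ((j - (q - 1) / 2) * t) := by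
          simp [dirichletKernel]
      _ = (∑ j ∈ Finset.range q, e j +
            ∑ j ∈ Finset.range q, Complex.exp (-((j - (q - 1) / 2) * t) * Complex.I)) / 2 := by
          simp only [Complex.cos, ← Finset.sum_div, Finset.sum_add_distrib, e]
      _ = ∑ j ∈ Finset.range q, e j := by rw [hreflect, add_self_div_two]
  rw [hsum, Finset.sum_mul]
  refine Finset.sum_congr rfl fun j _ => ?_
  rw [← Complex.exp_add, ← Complex.exp_nat_mul]
  ring_nf

protected theorem abs_lt {q : ℕ} (hq : 2 ≤ q) {t : ℝ} (ht : |t| < 2 * π) (ht0 : t ≠ 0) :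
    |dirichletKernel q t| < q := by
  obtain ⟨p, rfl⟩ := Nat.exists_eq_add_of_le' hq
  have hcos : |Real.cos (t / 2)| < 1 := by
    have hsin : Real.sin (t / 2) ≠ 0 := by
      obtain ⟨hlo, hhi⟩ := abs_lt.1 ht
      rw [Ne, Real.sin_eq_zero_iff_of_lt_of_lt (by linarith) (by linarith)]
      exact div_ne_zero ht0 two_ne_zero
    rw [← sq_lt_one_iff_abs_lt_one, Real.cos_sq']
    linarith [sq_pos_of_ne_zero hsin]
  -- The two highest frequencies interfere, since they differ by `1`.
  have hpair : Real.cos ((p - (p + 1) / 2) * t) + Real.cos ((p + 1 - (p + 1) / 2) * t) =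
      2 * Real.cos (p / 2 * t) * Real.cos (t / 2) := by
    rw [Real.cos_add_cos, ← Real.cos_neg (t / 2)]
    ring_nf
  have hsplit : dirichletKernel (p + 2) t =
      ∑ j ∈ Finset.range p, Real.cos ((j - (p + 1) / 2) * t) +
        2 * Real.cos (p / 2 * t) * Real.cos (t / 2) := by
    have hcentre : ((p + 2 : ℕ) - 1 : ℝ) / 2 = (p + 1) / 2 := by push_cast; ring
    rw [dirichletKernel, hcentre, Finset.sum_range_succ, Finset.sum_range_succ, add_assoc, ← hpair,
      Nat.cast_succ]
  have hrest : |∑ j ∈ Finset.range p, Real.cos ((j - (p + 1) / 2) * t)| ≤ p := by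
    simpa using (Finset.abs_sum_le_sum_abs _ (Finset.range p)).trans
      (Finset.sum_le_card_nsmul _ _ 1 fun j _ => Real.abs_cos_le_one _)
  calc |dirichletKernel (p + 2) t|
      ≤ p + 2 * |Real.cos (p / 2 * t)| * |Real.cos (t / 2)| := by
        rw [hsplit]
        refine (abs_add_le _ _).trans (add_le_add hrest ?_)
        rw [abs_mul, abs_mul, abs_two]
    _ ≤ p + 2 * 1 * |Real.cos (t / 2)| := by gcongr; exact Real.abs_cos_le_one _
    _ < (p + 2 : ℕ) := by push_cast; linarith

theorem div_sub_isLittleO_sq {q : ℕ} (hq : q ≠ 0) :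
    (fun t => dirichletKernel q t / q - (1 - (q ^ 2 - 1) / 24 * t ^ 2)) =o[𝓝 0]
      fun t => t ^ 2 := by
  have hq' : (q : ℝ) ≠ 0 := Nat.cast_ne_zero.2 hq
  have hsum := (IsLittleO.sum fun j (_ : j ∈ Finset.range q) =>
    cos_mul_sub_isLittleO_sq (j - (q - 1) / 2)).const_mul_left (q : ℝ)⁻¹
  refine hsum.congr_left fun t => ?_
  rw [Finset.sum_apply, Finset.sum_sub_distrib, Finset.sum_sub_distrib, ← Finset.sum_mul,
    ← Finset.sum_div, sum_range_sub_sq, ← dirichletKernel, Finset.sum_const,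
    Finset.card_range, nsmul_one]
  field_simp
  ring

protected theorem integral_pow {n q k : ℕ} (hq : q ≠ 0) (hk : 2 * k = n * (q - 1)) :
    ∫ t in -π..π, dirichletKernel q t ^ n = 2 * π * polyCoeff n q k := by
  let p : Polynomial ℂ := (∑ j ∈ Finset.range q, Polynomial.X ^ j) ^ n
  have hcoeff : p.coeff k = polyCoeff n q k := by
    rw [polyCoeff, ← eq_natCast (Nat.castRingHom ℂ), ← Polynomial.coeff_map]
    simp [p, Polynomial.map_sum]
  have hphase : (n : ℂ) * ((q - 1) / 2) = k := by
    have hk' : (2 : ℂ) * k = n * (q - 1) := by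
      rw [← Nat.cast_pred (Nat.pos_of_ne_zero hq)]
      exact_mod_cast hk
    linear_combination -hk' / 2
  have hintegrand (t : ℝ) : Complex.exp (-(k * t * Complex.I)) *
      p.eval (Complex.exp (t * Complex.I)) = ((dirichletKernel q t ^ n : ℝ) : ℂ) := by
    have hexp : Complex.exp ((q - 1) / 2 * t * Complex.I) ^ n =
        Complex.exp (k * t * Complex.I) := by
      rw [← Complex.exp_nat_mul, ← hphase]
      ring_nf
    have heval : p.eval (Complex.exp (t * Complex.I)) =
        dirichletKernel q t ^ n * Complex.exp (k * t * Complex.I) := by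
      simp only [p, Polynomial.eval_pow, Polynomial.eval_finsetSum, Polynomial.eval_X]
      rw [← ofReal_mul_exp, mul_pow, hexp]
    rw [heval, mul_left_comm, ← Complex.exp_add, neg_add_cancel, Complex.exp_zero, mul_one,
      Complex.ofReal_pow]
  have h := integral_exp_neg_mul_eval_exp p k
  simp only [hintegrand, hcoeff, intervalIntegral.integral_ofReal] at h
  exact_mod_cast h

theorem tendsto_sqrt_mul_integral_div_pow {q : ℕ} (hq : 2 ≤ q) :
    Tendsto (fun n : ℕ => √n * ∫ t in -π..π, (dirichletKernel q t / q) ^ n) atTop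
      (𝓝 √(π / ((q ^ 2 - 1) / 24))) := by
  have hq0 : (0 : ℝ) < q := by positivity
  have hq1 : (1 : ℝ) < q := by exact_mod_cast hq
  have hlt (t : ℝ) (ht : t ∈ Icc (-π) π) (ht0 : t ≠ 0) : |dirichletKernel q t / q| < 1 := by
    rw [abs_div, abs_of_pos hq0, div_lt_one hq0]
    exact dirichletKernel.abs_lt hq ((abs_le.2 ht).trans_lt (by linarith [Real.pi_pos])) ht0
  have h := tendsto_sqrt_mul_setIntegral_pow isCompact_Icc
    (Icc_mem_nhds (neg_lt_zero.2 Real.pi_pos) Real.pi_pos) (by fun_prop) hlt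
    (div_pos (sub_pos.2 (one_lt_pow₀ hq1 two_ne_zero)) (by norm_num))
    (div_sub_isLittleO_sq (by positivity))
  simpa only [integral_Icc_eq_integral_Ioc,
    ← intervalIntegral.integral_of_le (neg_le_self Real.pi_pos.le)] using h

end dirichletKernel

-- For even `q` the centre `n * (q - 1) / 2` is an integer along even `n` only,
-- whence the filter `l`.
theorem central_trinomial_asymptotic_general {q : ℕ} (hq : 2 ≤ q) {l : Filter ℕ} (hl : l ≤ atTop)
    {k : ℕ → ℕ} (hk : ∀ᶠ n in l, 2 * k n = n * (q - 1)) :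
    Tendsto (fun n => (polyCoeff n q (k n) : ℝ) * √(π * n * (q ^ 2 - 1) / 6) / (q : ℝ) ^ n) l
      (𝓝 1) := by
  have hq1 : 0 < (q : ℝ) ^ 2 - 1 := sub_pos.2 (one_lt_pow₀ (by exact_mod_cast hq) two_ne_zero)
  have hlim := ((dirichletKernel.tendsto_sqrt_mul_integral_div_pow hq).mono_left hl).div_const
    √(π / ((q ^ 2 - 1) / 24))
  rw [div_self (by positivity)] at hlim
  refine hlim.congr' ?_
  filter_upwards [hk] with n hn
  have hsqrt : √(π * n * (q ^ 2 - 1) / 6) * √(π / ((q ^ 2 - 1) / 24)) = 2 * π * √n := by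
    have harg : π * n * (q ^ 2 - 1) / 6 * (π / ((q ^ 2 - 1) / 24)) = (2 * π) ^ 2 * n := by
      field_simp
      ring
    rw [← Real.sqrt_mul (by positivity), harg, Real.sqrt_mul (by positivity),
      Real.sqrt_sq (by positivity)]
  simp only [div_pow, intervalIntegral.integral_div]
  rw [dirichletKernel.integral_pow (by positivity) hn, div_eq_iff (by positivity),
    div_mul_eq_mul_div, mul_assoc (polyCoeff n q (k n) : ℝ), hsqrt]
  ring

theorem sqrt_div_three_pow (n : ℕ) :
    √(π * n * (3 ^ 2 - 1) / 6) / (3 : ℝ) ^ n =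
      2 * √(π * n) / (3 : ℝ) ^ ((n : ℝ) + 1 / 2) := by
  have harg : π * n * (3 ^ 2 - 1) / 6 = 2 ^ 2 * (π * n) / 3 := by ring
  rw [harg, Real.sqrt_div (by positivity), Real.sqrt_mul (by positivity),
    Real.sqrt_sq zero_le_two, Real.rpow_add three_pos, Real.rpow_natCast, ← Real.sqrt_eq_rpow,
    div_div, mul_comm √3]

theorem central_trinomial_asymptotic :
    Tendsto
      (fun n : ℕ =>
        (polyCoeff n 3 n : ℝ) * (2 * Real.sqrt (Real.pi * n)) /
          (3 : ℝ) ^ ((n : ℝ) + 1 / 2))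
      atTop (nhds 1) :=
  (central_trinomial_asymptotic_general (q := 3) (Nat.le_succ 2) le_rfl
    (.of_forall (mul_comm 2))).congr
      fun n => by rw [mul_div_assoc, Nat.cast_ofNat, sqrt_div_three_pow, ← mul_div_assoc]
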